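/- Let G be a group, M a commutative monoid generated by a subset X, and π a function from X to the normal subgroups of G. Define, for each s ∈ M, π̄_s to be the join of the left-normed iterated commutator subgroups [π_{s₁}, …, π_{s_d}] over all d ≥ 1 and all sequences (s₁, …, s_d) of elements of X with s₁ + ⋯ + s_d = s. Then for all s, t ∈ M, [π̄_s, π̄_t] ≤ π̄_{s+t}. -/

import Mathlib

/-- The left-normed iterated commutator `[A₁, …, A_k]` of a list of subgroups
(`⊤` by convention on the empty list). -/
def iteratedCommutator {G : Type*} [Group G] : List (Subgroup G) → Subgroup G
  | [] => ⊤
  | A :: l => l.foldl (fun H K => ⁅H, K⁆) A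

/-- `π̄_s`: the join of the iterated commutators `[π_{s₁}, …, π_{s_d}]` over all nonempty
sequences `(s₁, …, s_d)` of elements of `X` with `s₁ + ⋯ + s_d = s`. -/
def genFilter {G : Type*} [Group G] {M : Type*} [AddCommMonoid M]
    (X : Set M) (π : M → Subgroup G) (s : M) : Subgroup G :=
  ⨆ l ∈ {l : List M | l ≠ [] ∧ (∀ x ∈ l, x ∈ X) ∧ l.sum = s},
    iteratedCommutator (l.map π)

/-!
For `x ∈ X`, appending `x` to a sequence gives `[π̄_s, π_x] ≤ π̄_{s+x}`. If
`L = [π_{s₁}, …, π_{s_d}]` with `s₁ + ⋯ + s_d = r`, then `[[π_x, π̄_t], L]` and `[[π̄_t, L], π_x]`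
both lie in `π̄_{r+x+t}` by induction on `d`, because the sum does not depend on the order
of its terms. As `π̄_{r+x+t}` is normal, the three subgroups lemma modulo it gives
`[[L, π_x], π̄_t] ≤ π̄_{r+x+t}`.
-/

section CommutatorModNormal

variable {G : Type*} [Group G] {A B C N : Subgroup G} [N.Normal]

theorem commutator_le_iff_commutator_map_mk'_eq_bot :
    ⁅A, B⁆ ≤ N ↔ ⁅A.map (QuotientGroup.mk' N), B.map (QuotientGroup.mk' N)⁆ = ⊥ := by
  rw [← Subgroup.map_commutator, Subgroup.map_eq_bot_iff, QuotientGroup.ker_mk']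

theorem iSup_commutator_le_iff {ι : Sort*} {H : ι → Subgroup G} :
    ⁅⨆ i, H i, B⁆ ≤ N ↔ ∀ i, ⁅H i, B⁆ ≤ N := by
  simp only [commutator_le_iff_commutator_map_mk'_eq_bot,
    Subgroup.commutator_eq_bot_iff_le_centralizer, Subgroup.map_iSup, iSup_le_iff]

theorem commutator_commutator_le_of_rotate (hBCA : ⁅⁅B, C⁆, A⁆ ≤ N) (hCAB : ⁅⁅C, A⁆, B⁆ ≤ N) :
    ⁅⁅A, B⁆, C⁆ ≤ N := by
  rw [commutator_le_iff_commutator_map_mk'_eq_bot, Subgroup.map_commutator] at hBCA hCAB ⊢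
  exact Subgroup.commutator_commutator_eq_bot_of_rotate hBCA hCAB

end CommutatorModNormal

section IteratedCommutator

variable {G : Type*} [Group G]

theorem iteratedCommutator_singleton (A : Subgroup G) : iteratedCommutator [A] = A :=
  rfl

theorem iteratedCommutator_concat {l : List (Subgroup G)} (hl : l ≠ []) (A : Subgroup G) :
    iteratedCommutator (l ++ [A]) = ⁅iteratedCommutator l, A⁆ := by
  obtain ⟨B, l, rfl⟩ := List.exists_cons_of_ne_nil hl
  exact List.foldl_concat ..

theorem iteratedCommutator_normal {l : List (Subgroup G)} (h : ∀ A ∈ l, A.Normal) :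
    (iteratedCommutator l).Normal := by
  induction l using List.reverseRecOn with
  | nil => exact Subgroup.normal_top
  | append_singleton l A ih =>
    obtain ⟨hl_normal, hA⟩ := List.forall_mem_append.1 h
    have hA : A.Normal := List.forall_mem_singleton.1 hA
    rcases eq_or_ne l [] with rfl | hl
    · exact hA
    · have := ih hl_normal
      rw [iteratedCommutator_concat hl]
      exact Subgroup.commutator_normal _ _

theorem iteratedCommutator_commutator_le {M : Type*} [AddCommMonoid M] {π F : M → Subgroup G}
    [∀ s, (F s).Normal] {l : List M} (hl : l ≠ [])
    (hF : ∀ x ∈ l, ∀ s, ⁅F s, π x⁆ ≤ F (s + x)) (t : M) :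
    ⁅iteratedCommutator (l.map π), F t⁆ ≤ F (l.sum + t) := by
  induction l using List.reverseRecOn generalizing t with
  | nil => exact absurd rfl hl
  | append_singleton l x ih =>
    obtain ⟨hF_l, hF_x⟩ := List.forall_mem_append.1 hF
    have hF_x : ∀ s, ⁅F s, π x⁆ ≤ F (s + x) := List.forall_mem_singleton.1 hF_x
    rw [List.map_append, List.map_singleton, List.sum_append, List.sum_singleton]
    rcases eq_or_ne l [] with rfl | hl
    · rw [List.map_nil, List.nil_append, List.sum_nil, zero_add, iteratedCommutator_singleton,
        Subgroup.commutator_comm, add_comm x]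
      exact hF_x t
    · replace ih := ih hl hF_l
      rw [iteratedCommutator_concat (by simpa using hl)]
      set L := iteratedCommutator (l.map π)
      apply commutator_commutator_le_of_rotate
      · calc ⁅⁅π x, F t⁆, L⁆
          _ = ⁅L, ⁅F t, π x⁆⁆ := by rw [Subgroup.commutator_comm, Subgroup.commutator_comm (π x)]
          _ ≤ ⁅L, F (t + x)⁆ := Subgroup.commutator_mono le_rfl (hF_x t)
          _ ≤ F (l.sum + (t + x)) := ih (t + x)
          _ = F (l.sum + x + t) := by rw [add_assoc, add_comm x]
      · calc ⁅⁅F t, L⁆, π x⁆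
          _ = ⁅⁅L, F t⁆, π x⁆ := by rw [Subgroup.commutator_comm (F t)]
          _ ≤ ⁅F (l.sum + t), π x⁆ := Subgroup.commutator_mono (ih t) le_rfl
          _ ≤ F (l.sum + t + x) := hF_x _
          _ = F (l.sum + x + t) := by rw [add_right_comm]

end IteratedCommutator

section GenFilter

variable {G : Type*} [Group G] {M : Type*} [AddCommMonoid M] {X : Set M} {π : M → Subgroup G}

theorem iteratedCommutator_le_genFilter {l : List M} (hl : l ≠ []) (hlX : ∀ x ∈ l, x ∈ X) :
    iteratedCommutator (l.map π) ≤ genFilter X π l.sum :=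
  le_iSup₂_of_le l ⟨hl, hlX, rfl⟩ le_rfl

theorem genFilter_normal (hπ : ∀ x ∈ X, (π x).Normal) (s : M) : (genFilter X π s).Normal :=
  Subgroup.biSup_normal _ _ fun _ hl =>
    iteratedCommutator_normal <| List.forall_mem_map.2 fun x hx => hπ x (hl.2.1 x hx)

theorem genFilter_commutator_le_iff {s : M} {K N : Subgroup G} [N.Normal] :
    ⁅genFilter X π s, K⁆ ≤ N ↔
      ∀ l : List M, l ≠ [] → (∀ x ∈ l, x ∈ X) → l.sum = s →
        ⁅iteratedCommutator (l.map π), K⁆ ≤ N := by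
  simp only [genFilter, iSup_commutator_le_iff, Set.mem_ofPred_eq, and_imp]

theorem genFilter_commutator_le_genFilter_add (hπ : ∀ x ∈ X, (π x).Normal) (s : M) {x : M}
    (hx : x ∈ X) : ⁅genFilter X π s, π x⁆ ≤ genFilter X π (s + x) := by
  have := genFilter_normal hπ (s + x)
  refine genFilter_commutator_le_iff.2 ?_
  rintro l hl hlX rfl
  have hlxX : ∀ y ∈ l ++ [x], y ∈ X :=
    List.forall_mem_append.2 ⟨hlX, List.forall_mem_singleton.2 hx⟩
  calc ⁅iteratedCommutator (l.map π), π x⁆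
    _ = iteratedCommutator ((l ++ [x]).map π) := by
      rw [List.map_append, List.map_singleton, iteratedCommutator_concat (by simpa using hl)]
    _ ≤ genFilter X π (l ++ [x]).sum :=
      iteratedCommutator_le_genFilter (List.concat_ne_nil x l) hlxX
    _ = genFilter X π (l.sum + x) := by rw [List.sum_append, List.sum_singleton]

end GenFilter

theorem statement5_general {G : Type*} [Group G] {M : Type*} [AddCommMonoid M]
    (X : Set M) (π : M → Subgroup G) (hπ : ∀ x ∈ X, (π x).Normal) (s t : M) :
    ⁅genFilter X π s, genFilter X π t⁆ ≤ genFilter X π (s + t) := by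
  have hnormal := genFilter_normal hπ
  refine genFilter_commutator_le_iff.2 ?_
  rintro l hl hlX rfl
  have hstep : ∀ x ∈ l, ∀ r, ⁅genFilter X π r, π x⁆ ≤ genFilter X π (r + x) :=
    fun x hx r => genFilter_commutator_le_genFilter_add hπ r (hlX x hx)
  exact iteratedCommutator_commutator_le hl hstep t

theorem statement5 {G : Type*} [Group G] {M : Type*} [AddCommMonoid M]
    (X : Set M) (hX : AddSubmonoid.closure X = ⊤)
    (π : M → Subgroup G) (hπ : ∀ x ∈ X, (π x).Normal) (s t : M) :
    ⁅genFilter X π s, genFilter X π t⁆ ≤ genFilter X π (s + t) :=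
  statement5_general X π hπ s t
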